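/- arXiv:2511.11618 — 2 statements merged into one kernel-verified Lean document; each statement's English description precedes it below -/
import Mathlib

section
/- Let G be a simple graph on a finite vertex type, let T be an acyclic subgraph of G on the same vertex set such that any two vertices reachable in G are reachable in T (a spanning forest of G), and let e = {u, v} be an edge of G that is not an edge of T. Then G contains a cycle that traverses e and all of whose other edges are edges of T. -/
section FundamentalCycle

open SimpleGraph

variable {V : Type*} {G T : SimpleGraph V} {u v : V}

theorem isCycle_cons_mapLe_of_not_adj (hle : T ≤ G) (huv : G.Adj u v) (hT : ¬ T.Adj u v)
    {p : T.Walk v u} (hp : p.IsPath) : (Walk.cons huv (p.mapLe hle)).IsCycle := by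
  have huv_notMem : s(u, v) ∉ (p.mapLe hle).edges := by
    rw [Walk.edges_mapLe_eq_edges]
    exact fun hmem => hT (p.adj_of_mem_edges hmem)
  exact (Walk.cons_isCycle_iff _ huv).2 ⟨hp.mapLe hle, huv_notMem⟩

theorem mem_edgeSet_of_mem_edges_cons_mapLe (hle : T ≤ G) (huv : G.Adj u v) (p : T.Walk v u)
    {e : Sym2 V} (he : e ∈ (Walk.cons huv (p.mapLe hle)).edges) (hne : e ≠ s(u, v)) :
    e ∈ T.edgeSet := by
  rw [Walk.edges_cons, Walk.edges_mapLe_eq_edges, List.mem_cons] at he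
  exact p.edges_subset_edgeSet (he.resolve_left hne)

theorem spanning_forest_fundamental_cycle_general (hle : T ≤ G) (hreach : T.Reachable u v)
    (huv : G.Adj u v) (hT : ¬ T.Adj u v) :
    ∃ c : G.Walk u u, c.IsCycle ∧ s(u, v) ∈ c.edges ∧
      ∀ e ∈ c.edges, e ≠ s(u, v) → e ∈ T.edgeSet := by
  obtain ⟨p, hp⟩ := hreach.symm.exists_isPath
  exact ⟨Walk.cons huv (p.mapLe hle), isCycle_cons_mapLe_of_not_adj hle huv hT hp,
    List.mem_cons_self, fun _ => mem_edgeSet_of_mem_edges_cons_mapLe hle huv p⟩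

end FundamentalCycle

/-- If `T` is a spanning forest of `G` (acyclic, same reachability as `G`) and
`e = {u, v}` is an edge of `G` not in `T`, then `G` contains a cycle traversing
`e` all of whose other edges are edges of `T`. -/
theorem spanning_forest_fundamental_cycle {V : Type*} [Fintype V]
    (G T : SimpleGraph V) (hle : T ≤ G) (hac : T.IsAcyclic)
    (hspan : ∀ u v : V, T.Reachable u v ↔ G.Reachable u v)
    (u v : V) (huv : G.Adj u v) (hT : ¬ T.Adj u v) :
    ∃ (a : V) (c : G.Walk a a), c.IsCycle ∧ s(u, v) ∈ c.edges ∧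
      ∀ e' ∈ c.edges, e' ≠ s(u, v) → e' ∈ T.edgeSet :=
  ⟨u, spanning_forest_fundamental_cycle_general hle ((hspan u v).2 huv.reachable) huv hT⟩
end

section
/- Let Vtx and Fc be finite nonempty types (the vertices and faces of a polygonal mesh mapped onto the unit sphere), let E be a natural number (the number of edges), let k : Fc → ℕ give the number of sides of each face, let α : Fc → Vtx → ℝ give the corner angle of each face at each vertex (zero when the vertex is not a corner of the face), and let A : Fc → ℝ give the spherical area of each face. Assume: (i) the faces tile the sphere, ∑_{f} A f = 4π; (ii) Harriot's formula holds for each face, A f = (∑_{v} α f v) − (k f − 2)·π; (iii) the angles around each vertex sum to a full turn, ∑_{f} α f v = 2π for every vertex v; and (iv) every edge is shared by exactly two faces in the sense that ∑_{f} k f = 2·E. Then Euler's formula holds: (card Vtx : ℝ) − E + card Fc = 2. -/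
open Finset

/-!
Harriot's formula says that the area of a spherical polygon is its angular excess. Summed over the
faces of any mesh, the angular excess is purely combinatorial: the angles contribute `2π` for each
vertex, and the straight angles subtracted contribute `-2π` for each edge and `2π` for each face, so
the total is `2π (V - E + F)`. On the unit sphere the areas add up to `4π`, hence `V - E + F = 2`.
-/

section AngularExcess

variable {Vtx Fc : Type*} [Fintype Vtx]

/-- The angular excess of a polygon with `n` sides: the amount by which the sum of its angles `θ`
exceeds the angle sum `(n - 2)π` of a Euclidean polygon with `n` sides. The angles are indexed by
the vertices of an ambient mesh, and `θ` vanishes at those that are not corners of the polygon. -/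
noncomputable def angularExcess (n : ℕ) (θ : Vtx → ℝ) : ℝ :=
  (∑ v, θ v) - ((n : ℝ) - 2) * Real.pi

variable [Fintype Fc]

theorem sum_angularExcess (k : Fc → ℕ) (α : Fc → Vtx → ℝ) :
    ∑ f, angularExcess (k f) (α f) =
      (∑ v, ∑ f, α f v) - ((∑ f, (k f : ℝ)) - 2 * Fintype.card Fc) * Real.pi := by
  have hstraight : ∑ f, ((k f : ℝ) - 2) = (∑ f, (k f : ℝ)) - 2 * Fintype.card Fc := by
    simp [mul_comm]
  simp only [angularExcess]
  rw [sum_sub_distrib, sum_comm, ← sum_mul, hstraight]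

theorem sum_angularExcess_eq_two_pi_mul {E : ℕ} {k : Fc → ℕ} {α : Fc → Vtx → ℝ}
    (hangles : ∀ v, ∑ f, α f v = 2 * Real.pi) (hedges : ∑ f, k f = 2 * E) :
    ∑ f, angularExcess (k f) (α f) =
      2 * Real.pi * ((Fintype.card Vtx : ℝ) - E + Fintype.card Fc) := by
  have hvertices : ∑ v, ∑ f, α f v = Fintype.card Vtx * (2 * Real.pi) := by
    simp [hangles]
  have hsides : ∑ f, (k f : ℝ) = 2 * E := mod_cast hedges
  rw [sum_angularExcess, hvertices, hsides]
  ring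

end AngularExcess

/-- Euler's formula `V - E + F = 2` for a polygonal mesh mapped onto the unit
sphere, derived from: the faces tiling the sphere, Harriot's formula for the
area of a spherical polygon, the angles around each vertex summing to `2π`,
and every edge being shared by exactly two faces. -/
theorem euler_formula_of_sphere_mesh {Vtx Fc : Type*} [Fintype Vtx]
    [Fintype Fc] [Nonempty Vtx] [Nonempty Fc] (E : ℕ) (k : Fc → ℕ)
    (α : Fc → Vtx → ℝ) (A : Fc → ℝ)
    (htile : ∑ f, A f = 4 * Real.pi)
    (hHarriot : ∀ f, A f = (∑ v, α f v) - ((k f : ℝ) - 2) * Real.pi)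
    (hangles : ∀ v, ∑ f, α f v = 2 * Real.pi)
    (hedges : ∑ f, k f = 2 * E) :
    (Fintype.card Vtx : ℝ) - (E : ℝ) + (Fintype.card Fc : ℝ) = 2 := by
  have htotal : 2 * Real.pi * ((Fintype.card Vtx : ℝ) - E + Fintype.card Fc) = 2 * Real.pi * 2 :=
    calc
      _ = ∑ f, angularExcess (k f) (α f) := (sum_angularExcess_eq_two_pi_mul hangles hedges).symm
      _ = ∑ f, A f := sum_congr rfl fun f _ => (hHarriot f).symm
      _ = 4 * Real.pi := htile
      _ = 2 * Real.pi * 2 := by ring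
  exact mul_left_cancel₀ Real.two_pi_pos.ne' htotal
end
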